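/- Let α > -1 and let f : ℝ₊ → ℝ be Borel measurable such that K_f(z,w) = (2 Re z)^{α/2} (2 Re w)^{α/2} ∫₀^∞ f(t) e^{-t(z+w̄)} dt is well-defined on H₊². Then ∫_{H₊} |K_f(z,w)|² dA(w) = ∫₀^∞ e^{-2xs} f(s)² Γ(α+1) s^{-(α+1)} ds · (2x)^α for every z ∈ H₊ with x = Re z. -/

import Mathlib

open MeasureTheory Complex

/-- The Laplace-type kernel `K_f(z,w) = (2 Re z)^{α/2}(2 Re w)^{α/2}
    ∫₀^∞ f(t) e^{-t(z + conj w)} dt`. -/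
noncomputable def laplaceKernel (α : ℝ) (f : ℝ → ℝ) (z w : ℂ) : ℂ :=
  (((2 * z.re) ^ (α / 2) * (2 * w.re) ^ (α / 2) : ℝ) : ℂ) *
    ∫ t in Set.Ioi (0 : ℝ),
      ((f t : ℝ) : ℂ) * Complex.exp (-(t : ℂ) * (z + (starRingEnd ℂ) w))

open scoped FourierTransform SchwartzMap ContDiff

lemma plancherel_aux (g : ℝ → ℂ) (hg : Integrable g) (h2 : MemLp (𝓕 g) 2 volume) :
    MemLp g 2 volume ∧ ∫ ξ, ‖𝓕 g ξ‖ ^ 2 = ∫ t, ‖g t‖ ^ 2 := by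
  set G : Lp (α := ℝ) ℂ 2 volume := MemLp.toLp (𝓕 g) h2 with hG
  set P : Lp (α := ℝ) ℂ 2 volume := 𝓕⁻ G with hP
  have hae : ∀ᵐ x, g x = P x := by
    apply ae_eq_of_integral_contDiff_smul_eq hg.locallyIntegrable
      ((Lp.memLp P).locallyIntegrable (by norm_num))
    intro φ hφ hφc
    have hg₁ : HasCompactSupport (Complex.ofRealCLM ∘ φ) := hφc.comp_left rfl
    have hg₂ : ContDiff ℝ ∞ (Complex.ofRealCLM ∘ φ) := by fun_prop
    set Φ : 𝓢(ℝ, ℂ) := hg₁.toSchwartzMap hg₂ with hΦ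
    have h1 : ∫ x, φ x • P x = (P : 𝓢'(ℝ, ℂ)) Φ := by
      simp [hΦ]
    have h3 : (P : 𝓢'(ℝ, ℂ)) Φ = (G : 𝓢'(ℝ, ℂ)) (𝓕⁻ Φ) := by
      rw [hP, ← Lp.fourierInv_toTemperedDistribution_eq, TemperedDistribution.fourierInv_apply]
    have h4 : (G : 𝓢'(ℝ, ℂ)) (𝓕⁻ Φ) = ∫ x, (𝓕⁻ Φ) x • 𝓕 g x := by
      rw [Lp.toTemperedDistribution_apply]
      apply integral_congr_ae
      filter_upwards [h2.coeFn_toLp] with x hx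
      rw [hG, hx]
    have h5 : ∫ x, (𝓕⁻ Φ) x • 𝓕 g x = ∫ x, (𝓕 (𝓕⁻ Φ : 𝓢(ℝ, ℂ))) x • g x := by
      rw [SchwartzMap.fourier_coe]
      simpa using! (VectorFourier.integral_fourierIntegral_smul_eq_flip (L := innerₗ ℝ) (ν := volume)
        Real.continuous_fourierChar continuous_inner (𝓕⁻ Φ).integrable hg).symm
    rw [h1, h3, h4, h5, FourierTransform.fourier_fourierInv_eq]
    simp [hΦ]
  have hm : MemLp g 2 volume := (memLp_congr_ae hae).2 (Lp.memLp P)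
  refine ⟨hm, ?_⟩
  have hn : ‖P‖ = ‖G‖ := by
    rw [← Lp.norm_fourier_eq P, hP, FourierTransform.fourier_fourierInv_eq]
  have e1 : ∀ Q : Lp (α := ℝ) ℂ 2 volume, ‖Q‖ ^ 2 = ∫ x, ‖Q x‖ ^ 2 := by
    intro Q
    have := MeasureTheory.L2.inner_def (𝕜 := ℂ) Q Q
    have h := congrArg RCLike.re this
    rw [← norm_sq_eq_re_inner, ← integral_re (L2.integrable_inner Q Q)] at h
    rw [h]
    simp only [← norm_sq_eq_re_inner]
  have h6 := e1 P
  rw [hn, e1 G] at h6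
  have h7 : ∫ x, ‖G x‖ ^ 2 = ∫ ξ, ‖𝓕 g ξ‖ ^ 2 := by
    apply integral_congr_ae
    filter_upwards [h2.coeFn_toLp] with x hx
    rw [hG, hx]
  have h8 : ∫ x, ‖P x‖ ^ 2 = ∫ ξ, ‖g ξ‖ ^ 2 := by
    apply integral_congr_ae
    filter_upwards [hae] with x hx
    rw [hx]
  rw [← h7, ← h8, h6]


/-- The truncated, exponentially damped function whose Fourier transform gives the kernel. -/
noncomputable def dampedFun (f : ℝ → ℝ) (a : ℝ) : ℝ → ℂ :=
  Set.indicator (Set.Ioi 0) (fun t => ((f t * Real.exp (-(t * a)) : ℝ) : ℂ))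

lemma dampedFun_integrable (f : ℝ → ℝ) (a : ℝ)
    (h : IntegrableOn (fun t => f t * Real.exp (-(t * a))) (Set.Ioi 0)) :
    Integrable (dampedFun f a) := by
  unfold dampedFun
  rw [integrable_indicator_iff measurableSet_Ioi]
  exact Integrable.ofReal h

lemma dampedFun_norm_sq (f : ℝ → ℝ) (a t : ℝ) : ‖dampedFun f a t‖ ^ 2 =
    Set.indicator (Set.Ioi 0) (fun t => f t ^ 2 * Real.exp (-(2 * t * a))) t := by
  unfold dampedFun
  by_cases ht : t ∈ Set.Ioi (0 : ℝ)
  · rw [Set.indicator_of_mem ht, Set.indicator_of_mem ht, Complex.norm_real, Real.norm_eq_abs,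
      sq_abs, mul_pow, ← Real.exp_nat_mul]
    congr 2
    push_cast
    ring
  · simp [Set.indicator_of_notMem ht]

lemma laplaceKernel_norm_sq (α : ℝ) (f : ℝ → ℝ) (z : ℂ) (hz : 0 < z.re) (u v : ℝ) (hu : 0 < u) :
    ‖laplaceKernel α f z ⟨u, v⟩‖ ^ 2 = (2 * z.re) ^ α * (2 * u) ^ α *
      ‖𝓕 (dampedFun f (z.re + u)) ((z.im - v) / (2 * Real.pi))‖ ^ 2 := by
  have hF : (∫ t in Set.Ioi (0 : ℝ),
      ((f t : ℝ) : ℂ) * Complex.exp (-(t : ℂ) * (z + (starRingEnd ℂ) (⟨u, v⟩ : ℂ)))) =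
      𝓕 (dampedFun f (z.re + u)) ((z.im - v) / (2 * Real.pi)) := by
    rw [Real.fourier_real_eq_integral_exp_smul, ← integral_indicator measurableSet_Ioi]
    congr 1
    ext t
    unfold dampedFun
    by_cases ht : t ∈ Set.Ioi (0 : ℝ)
    · rw [Set.indicator_of_mem ht, Set.indicator_of_mem ht]
      have h1 : -(t : ℂ) * (z + (starRingEnd ℂ) (⟨u, v⟩ : ℂ)) =
          ((-(t * (z.re + u)) : ℝ) : ℂ) +
            ((-2 * Real.pi * t * ((z.im - v) / (2 * Real.pi)) : ℝ) : ℂ) * I := by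
        have h2 : -2 * Real.pi * t * ((z.im - v) / (2 * Real.pi)) = -(t * (z.im - v)) := by
          field_simp
        rw [h2]
        apply Complex.ext
        · simp
        · simp [sub_eq_add_neg]
      rw [h1, Complex.exp_add, smul_eq_mul]
      push_cast
      ring
    · simp [Set.indicator_of_notMem ht]
  unfold laplaceKernel
  rw [hF, norm_mul, mul_pow, Complex.norm_real, Real.norm_eq_abs, sq_abs, mul_pow]
  have h3 : ∀ a : ℝ, 0 < a → (a ^ (α / 2)) ^ 2 = a ^ α := by
    intro a ha
    rw [← Real.rpow_natCast, ← Real.rpow_mul ha.le]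
    congr 1
    push_cast
    ring
  rw [h3 _ (by positivity), h3 _ (by positivity)]

lemma gamma_inner (α : ℝ) (hα : -1 < α) (t : ℝ) (ht : 0 < t) :
    ∫ u in Set.Ioi (0 : ℝ), (2 * u) ^ α * Real.exp (-(2 * t * u)) =
      Real.Gamma (α + 1) * t ^ (-(α + 1)) / 2 := by
  have h := Real.integral_rpow_mul_exp_neg_mul_Ioi (a := α + 1) (r := 2 * t) (by linarith)
    (by positivity)
  rw [add_sub_cancel_right] at h
  have h1 : ∫ u in Set.Ioi (0 : ℝ), (2 * u) ^ α * Real.exp (-(2 * t * u)) =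
      ∫ u in Set.Ioi (0 : ℝ), 2 ^ α * (u ^ α * Real.exp (-(2 * t * u))) := by
    apply setIntegral_congr_fun measurableSet_Ioi
    intro u hu
    simp only
    rw [Real.mul_rpow (by norm_num) (le_of_lt hu), mul_assoc]
  rw [h1, integral_const_mul, h, one_div, Real.inv_rpow (by positivity),
    Real.mul_rpow (by norm_num) ht.le, Real.rpow_neg ht.le, Real.rpow_add_one (by norm_num) α]
  have : (2 : ℝ) ^ α ≠ 0 := by positivity
  field_simp

/-- For a Borel measurable `f` with suitable integrability,
    `∫_{H₊} |K_f(z,w)|² dA(w) = (2x)^α ∫₀^∞ e^{-2xs} f(s)² Γ(α+1) s^{-(α+1)} ds`,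
    with `x = Re z` and `dA` Lebesgue measure divided by π. -/
theorem laplaceKernel_square_integral (α : ℝ) (hα : -1 < α) (f : ℝ → ℝ)
    (hf : Measurable f)
    (hint : ∀ x : ℝ, 0 < x →
      IntegrableOn (fun t => f t * Real.exp (-(t * x))) (Set.Ioi 0))
    (z : ℂ) (hz : 0 < z.re)
    (hsq : IntegrableOn (fun w => ‖laplaceKernel α f z w‖ ^ 2) {w : ℂ | 0 < w.re}) :
    (1 / Real.pi) * ∫ w in {w : ℂ | 0 < w.re}, ‖laplaceKernel α f z w‖ ^ 2
      = (2 * z.re) ^ α *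
        ∫ s in Set.Ioi (0 : ℝ),
          Real.exp (-(2 * z.re * s)) * (f s) ^ 2 * Real.Gamma (α + 1) * s ^ (-(α + 1)) := by
  set H : ℝ × ℝ → ℝ := fun p => ‖laplaceKernel α f z ⟨p.1, p.2⟩‖ ^ 2 with hH
  set μ : Measure ℝ := volume.restrict (Set.Ioi 0) with hμ
  have hset : {w : ℂ | 0 < w.re} = measurableEquivRealProd ⁻¹' (Set.Ioi 0 ×ˢ Set.univ) := by
    ext w
    simp
  have hcomp : (fun w => ‖laplaceKernel α f z w‖ ^ 2) = H ∘ measurableEquivRealProd := by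
    ext w
    simp [hH]
  have hprod : (volume : Measure (ℝ × ℝ)).restrict (Set.Ioi 0 ×ˢ Set.univ) = μ.prod volume := by
    rw [hμ, Measure.volume_eq_prod, ← Measure.prod_restrict, Measure.restrict_univ]
  have hHint : Integrable H (μ.prod volume) := by
    rw [hset, hcomp, volume_preserving_equiv_real_prod.integrableOn_comp_preimage
      measurableEquivRealProd.measurableEmbedding, IntegrableOn, hprod] at hsq
    exact hsq
  have hHeq : ∫ w in {w : ℂ | 0 < w.re}, ‖laplaceKernel α f z w‖ ^ 2 =
      ∫ u, (∫ v, H (u, v)) ∂μ := by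
    rw [← integral_prod H hHint, ← hprod, hset, hcomp]
    exact volume_preserving_equiv_real_prod.setIntegral_preimage_emb
      measurableEquivRealProd.measurableEmbedding H _
  set Φ : ℝ → ℝ → ℝ := fun u t => (2 * z.re) ^ α * (2 * u) ^ α * (2 * Real.pi) *
    (f t ^ 2 * Real.exp (-(2 * t * (z.re + u)))) with hΦ
  have hpos : ∀ᵐ u ∂μ, 0 < u := ae_restrict_mem measurableSet_Ioi
  have key : ∀ᵐ u ∂μ, Integrable (Φ u) μ ∧ ∫ v, H (u, v) = ∫ t, Φ u t ∂μ := by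
    filter_upwards [hHint.prod_right_ae, hpos] with u hu hu0
    have hHu : ∀ v, H (u, v) = (2 * z.re) ^ α * (2 * u) ^ α *
        ‖𝓕 (dampedFun f (z.re + u)) ((z.im - v) / (2 * Real.pi))‖ ^ 2 := fun v =>
      laplaceKernel_norm_sq α f z hz u v hu0
    have hc : (2 * z.re) ^ α * (2 * u) ^ α ≠ 0 := by positivity
    have hg := dampedFun_integrable f (z.re + u) (hint _ (by linarith))
    simp only [hHu] at hu ⊢
    have hu2 := (integrable_const_mul_iff (IsUnit.mk0 _ hc) _).1 hu
    have hu3 := hu2.comp_sub_left z.im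
    simp only [sub_sub_cancel] at hu3
    rw [integrable_comp_div_iff (fun x => ‖𝓕 (dampedFun f (z.re + u)) x‖ ^ 2)
      (by positivity)] at hu3
    have hcont : Continuous (𝓕 (dampedFun f (z.re + u))) :=
      VectorFourier.fourierIntegral_continuous Real.continuous_fourierChar
        continuous_inner hg
    obtain ⟨hm, he⟩ := plancherel_aux _ hg
      ((memLp_two_iff_integrable_sq_norm hcont.aestronglyMeasurable).2 hu3)
    have hm2 := (memLp_two_iff_integrable_sq_norm hm.1).1 hm
    simp only [dampedFun_norm_sq] at hm2 he
    rw [integral_indicator measurableSet_Ioi] at he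
    change Integrable (Set.indicator _ _) _ at hm2
    rw [integrable_indicator_iff measurableSet_Ioi] at hm2
    refine ⟨hm2.const_mul _, ?_⟩
    rw [integral_const_mul,
      integral_sub_left_eq_self (fun x => ‖𝓕 (dampedFun f (z.re + u)) (x / (2 * Real.pi))‖ ^ 2),
      Measure.integral_comp_div (fun x => ‖𝓕 (dampedFun f (z.re + u)) x‖ ^ 2), he,
      abs_of_pos (by positivity), hΦ, integral_const_mul, smul_eq_mul, mul_assoc _ (2 * Real.pi)]
  have hΦmeas : Measurable (Function.uncurry Φ) := by
    unfold Function.uncurry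
    simp only [hΦ]
    fun_prop
  have hΦint : Integrable (Function.uncurry Φ) (μ.prod μ) := by
    rw [integrable_prod_iff hΦmeas.aestronglyMeasurable]
    refine ⟨key.mono fun u hu => hu.1, ?_⟩
    refine hHint.integral_prod_left.congr ?_
    filter_upwards [key, hpos] with u hu hu0
    rw [hu.2]
    congr 1
    ext t
    rw [Real.norm_of_nonneg]
    · rfl
    · simp only [Function.uncurry, hΦ]
      positivity
  rw [hHeq, integral_congr_ae (key.mono fun u hu => hu.2), integral_integral_swap hΦint,
    ← integral_const_mul, ← integral_const_mul]
  apply setIntegral_congr_fun measurableSet_Ioi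
  intro t ht
  have hΦt : ∀ u, Φ u t = ((2 * z.re) ^ α * (2 * Real.pi) * f t ^ 2 *
      Real.exp (-(2 * z.re * t))) * ((2 * u) ^ α * Real.exp (-(2 * t * u))) := by
    intro u
    have : Real.exp (-(2 * t * (z.re + u))) =
        Real.exp (-(2 * z.re * t)) * Real.exp (-(2 * t * u)) := by
      rw [← Real.exp_add]
      congr 1
      ring
    simp only [hΦ, this]
    ring
  simp only [hΦt]
  rw [integral_const_mul, gamma_inner α hα t ht]
  field_simp
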